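/- Let n ≥ 1, let U ⊆ ℝⁿ be open, let C > 0 and k₀ ≥ 1, and for each k ≥ k₀ let H_k : U × ℝ → ℝ and φ_k : U → ℝ be smooth (C^∞) functions such that |φ_k(x)| ≤ C·k^{-2} and H_k(x, φ_k(x)) = 1 for all x ∈ U and k ≥ k₀. Assume: (a) for every multi-index α ∈ ℕ₀ⁿ and every ℓ ∈ ℕ₀ there is a constant C_{α,ℓ} > 0 such that |∂_x^α (∂/∂s)^ℓ H_k(x,s)| ≤ C_{α,ℓ}·k^ℓ for all k ≥ k₀, x ∈ U and |s| ≤ C·k^{-2}; (b) if moreover |α| ≥ 1, then |∂_x^α (∂/∂s)^ℓ H_k(x,s)| ≤ C_{α,ℓ}·k^{ℓ−1} on the same set; (c) |(∂/∂s) H_k(x,s)| ≥ k/C for all k ≥ k₀, x ∈ U and |s| ≤ C·k^{-2}. Then for every multi-index α ∈ ℕ₀ⁿ with |α| ≥ 1 there is a constant C'_α > 0 such that |∂_x^α φ_k(x)| ≤ C'_α·k^{-2} for all x ∈ U and all k ≥ k₀. -/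

import Mathlib

open Set

open scoped ContDiff Topology

section Helpers

variable {E : Type} [NormedAddCommGroup E] [NormedSpace ℝ E]
variable {V : Type} [NormedAddCommGroup V] [NormedSpace ℝ V]
variable {W : Type} [NormedAddCommGroup W] [NormedSpace ℝ W]
variable {X : Type} [NormedAddCommGroup X] [NormedSpace ℝ X]
variable {ι : Type}

/-- Joint smoothness on `U × ℝ`. -/
def Sm (U : Set E) (F : E → ℝ → V) : Prop :=
  ContDiffOn ℝ ∞ (fun p : E × ℝ => F p.1 p.2) (U ×ˢ univ)

lemma Sm.contDiffAt {U : Set E} (hU : IsOpen U) {F : E → ℝ → V} (h : Sm U F) {x : E}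
    (hx : x ∈ U) (s : ℝ) : ContDiffAt ℝ ∞ (fun p : E × ℝ => F p.1 p.2) (x, s) :=
  ContDiffOn.contDiffAt h ((hU.prod isOpen_univ).mem_nhds ⟨hx, mem_univ _⟩)

lemma hasFDerivAt_slice (x : E) (s : ℝ) :
    HasFDerivAt (fun y : E => (y, s)) (ContinuousLinearMap.inl ℝ E ℝ) x :=
  hasFDerivAt_prodMk_left x s

lemma hasDerivAt_slice (x : E) (s : ℝ) :
    HasDerivAt (fun t : ℝ => (x, t)) ((0 : E), (1 : ℝ)) s :=
  (hasDerivAt_const s x).prodMk (hasDerivAt_id s)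

lemma Sm.fderiv_eq {U : Set E} (hU : IsOpen U) {F : E → ℝ → V} (h : Sm U F) {x : E}
    (hx : x ∈ U) (s : ℝ) : fderiv ℝ (fun y => F y s) x =
      (fderiv ℝ (fun p : E × ℝ => F p.1 p.2) (x, s)).comp (ContinuousLinearMap.inl ℝ E ℝ) :=
  (HasFDerivAt.comp (g := fun p : E × ℝ => F p.1 p.2) (f := fun y => (y, s)) x
    ((h.contDiffAt hU hx s).differentiableAt (by simp)).hasFDerivAt
    (hasFDerivAt_slice x s)).fderiv

lemma Sm.deriv_eq {U : Set E} (hU : IsOpen U) {F : E → ℝ → V} (h : Sm U F) {x : E}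
    (hx : x ∈ U) (s : ℝ) : deriv (fun t => F x t) s =
      (fderiv ℝ (fun p : E × ℝ => F p.1 p.2) (x, s)) (0, 1) :=
  ((((h.contDiffAt hU hx s).differentiableAt (by simp)).hasFDerivAt).comp_hasDerivAt s
    (hasDerivAt_slice x s)).deriv

lemma Sm.fderiv_joint {U : Set E} (hU : IsOpen U) {F : E → ℝ → V} (h : Sm U F) :
    ContDiffOn ℝ ∞ (fderiv ℝ (fun p : E × ℝ => F p.1 p.2)) (U ×ˢ univ) :=
  ContDiffOn.fderiv_of_isOpen h (hU.prod isOpen_univ) (by simp)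

lemma Sm.dx {U : Set E} (hU : IsOpen U) {F : E → ℝ → V} (h : Sm U F) :
    Sm U (fun x s => fderiv ℝ (fun y => F y s) x) := by
  have h1 := (h.fderiv_joint hU).clm_comp
    (contDiffOn_const (c := ContinuousLinearMap.inl ℝ E ℝ))
  refine h1.congr ?_
  rintro ⟨x, s⟩ ⟨hx, -⟩
  exact h.fderiv_eq hU hx s

lemma Sm.ds {U : Set E} (hU : IsOpen U) {F : E → ℝ → V} (h : Sm U F) :
    Sm U (fun x s => deriv (fun t => F x t) s) := by
  have h1 := (h.fderiv_joint hU).clm_apply (contDiffOn_const (c := ((0 : E), (1 : ℝ))))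
  refine h1.congr ?_
  rintro ⟨x, s⟩ ⟨hx, -⟩
  exact h.deriv_eq hU hx s

lemma Sm.ds_iter {U : Set E} (hU : IsOpen U) (l : ℕ) : ∀ {F : E → ℝ → V}, Sm U F →
    Sm U (fun x s => iteratedDeriv l (fun t => F x t) s) := by
  induction l with
  | zero => intro F h; simpa using h
  | succ l ih =>
    intro F h
    have := ih (h.ds hU)
    simpa only [iteratedDeriv_succ'] using this

lemma Sm.slice {U : Set E} {F : E → ℝ → V} (h : Sm U F) (s : ℝ) :
    ContDiffOn ℝ ∞ (fun y => F y s) U :=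
  ContDiffOn.comp (g := fun p : E × ℝ => F p.1 p.2) (f := fun y => (y, s)) h
    (contDiffOn_id.prodMk contDiffOn_const)
    (fun _ hy => ⟨hy, mem_univ _⟩)

lemma Sm.graph {U : Set E} {F : E → ℝ → V} (h : Sm U F) {φ : E → ℝ}
    (hφ : ContDiffOn ℝ ∞ φ U) : ContDiffOn ℝ ∞ (fun y => F y (φ y)) U :=
  ContDiffOn.comp (g := fun p : E × ℝ => F p.1 p.2) (f := fun y => (y, φ y)) h
    (contDiffOn_id.prodMk hφ)
    (fun _ hy => ⟨hy, mem_univ _⟩)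

lemma Sm.smul {U : Set E} {F : E → ℝ → V} (h : Sm U F) (c : ℝ) :
    Sm U (fun x s => c • F x s) :=
  ContDiffOn.const_smul c h

lemma Sm.comm {U : Set E} (hU : IsOpen U) {F : E → ℝ → V} (h : Sm U F) {x : E}
    (hx : x ∈ U) (s : ℝ) : deriv (fun t => fderiv ℝ (fun y => F y t) x) s =
      fderiv ℝ (fun y => deriv (fun t => F y t) s) x := by
  set g : E × ℝ → V := fun p => F p.1 p.2 with hg
  have hg2 : HasFDerivAt (fderiv ℝ g) (fderiv ℝ (fderiv ℝ g) (x, s)) (x, s) :=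
    (((h.contDiffAt hU hx s).fderiv_right (m := ∞) (by simp)).differentiableAt
      (by simp)).hasFDerivAt
  have e1 : (fun t => fderiv ℝ (fun y => F y t) x) = fun t =>
      (fderiv ℝ g (x, t)).comp (ContinuousLinearMap.inl ℝ E ℝ) := by
    funext t; exact h.fderiv_eq hU hx t
  have e2 : (fun y => deriv (fun t => F y t) s) =ᶠ[𝓝 x] fun y => fderiv ℝ g (y, s) (0, 1) := by
    filter_upwards [hU.mem_nhds hx] with y hy
    exact h.deriv_eq hU hy s
  rw [e1, e2.fderiv_eq]
  have d1 : HasDerivAt (fun t => fderiv ℝ g (x, t)) (fderiv ℝ (fderiv ℝ g) (x, s) (0, 1)) s :=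
    hg2.comp_hasDerivAt s (hasDerivAt_slice x s)
  have d2 : HasFDerivAt (fun y => fderiv ℝ g (y, s))
      ((fderiv ℝ (fderiv ℝ g) (x, s)).comp (ContinuousLinearMap.inl ℝ E ℝ)) x :=
    hg2.comp x (hasFDerivAt_slice x s)
  have d1' := d1.clm_comp (hasDerivAt_const s (ContinuousLinearMap.inl ℝ E ℝ))
  have d2' := d2.clm_apply (hasFDerivAt_const ((0 : E), (1 : ℝ)) x)
  rw [d1'.deriv, d2'.fderiv]
  have hs : IsSymmSndFDerivAt ℝ g (x, s) :=
    (h.contDiffAt hU hx s).isSymmSndFDerivAt (by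
      rw [minSmoothness_of_isRCLikeNormedField]
      exact WithTop.coe_le_coe.2 le_top)
  ext v
  simpa using hs.eq (0, 1) (v, 0)

lemma Sm.comm_iter {U : Set E} (hU : IsOpen U) (l : ℕ) : ∀ {F : E → ℝ → V}, Sm U F →
    ∀ {x : E}, x ∈ U → ∀ s : ℝ, iteratedDeriv l (fun t => fderiv ℝ (fun y => F y t) x) s =
      fderiv ℝ (fun y => iteratedDeriv l (fun t => F y t) s) x := by
  induction l with
  | zero => intro F h x hx s; simp
  | succ l ih =>
    intro F h x hx s
    rw [iteratedDeriv_succ']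
    have : deriv (fun t => fderiv ℝ (fun y => F y t) x) =
        fun s => fderiv ℝ (fun y => deriv (fun t => F y t) s) x := by
      funext s; exact h.comm hU hx s
    rw [this, ih (h.ds hU) hx s]
    simp only [iteratedDeriv_succ']

lemma Sm.fderiv_graph {U : Set E} (hU : IsOpen U) {F : E → ℝ → V} (h : Sm U F) {φ : E → ℝ}
    (hφ : ContDiffOn ℝ ∞ φ U) {x : E} (hx : x ∈ U) :
    fderiv ℝ (fun y => F y (φ y)) x = fderiv ℝ (fun y => F y (φ x)) x +
      (fderiv ℝ φ x).smulRight (deriv (fun t => F x t) (φ x)) := by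
  have hd : HasFDerivAt φ (fderiv ℝ φ x) x :=
    ((hφ.contDiffAt (hU.mem_nhds hx)).differentiableAt (by simp)).hasFDerivAt
  have h1 := (((h.contDiffAt hU hx (φ x)).differentiableAt (by simp)).hasFDerivAt).comp x
    ((hasFDerivAt_id x).prodMk hd)
  have h2 : fderiv ℝ (fun y => F y (φ y)) x = _ := h1.fderiv
  rw [h2, h.fderiv_eq hU hx, h.deriv_eq hU hx]
  ext v
  simp only [ContinuousLinearMap.comp_apply, ContinuousLinearMap.add_apply,
    ContinuousLinearMap.smulRight_apply, ← map_smul, ← map_add]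
  simp

/-- Uniform bounds, over the parameter, of the derivatives of order `< N`. -/
def UB (U : Set E) (f : ι → E → V) (N : ℕ) : Prop :=
  (∀ a, ContDiffOn ℝ ∞ (f a) U) ∧
    ∀ j < N, ∃ M : ℝ, ∀ a, ∀ x ∈ U, ‖iteratedFDeriv ℝ j (f a) x‖ ≤ M

lemma UB.congr {U : Set E} (hU : IsOpen U) {f g : ι → E → V} {N : ℕ} (h : UB U f N)
    (hfg : ∀ a, ∀ x ∈ U, g a x = f a x) : UB U g N := by
  refine ⟨fun a => (h.1 a).congr (hfg a), fun j hj => ?_⟩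
  obtain ⟨M, hM⟩ := h.2 j hj
  refine ⟨M, fun a x hx => ?_⟩
  have : g a =ᶠ[𝓝 x] f a := by
    filter_upwards [hU.mem_nhds hx] with y hy using hfg a y hy
  rw [(this.iteratedFDeriv ℝ j).eq_of_nhds]
  exact hM a x hx

lemma UB.mono {U : Set E} {f : ι → E → V} {N N' : ℕ} (h : UB U f N) (hN : N' ≤ N) :
    UB U f N' := ⟨h.1, fun j hj => h.2 j (hj.trans_le hN)⟩

lemma UB.succ {U : Set E} {f : ι → E → V} {N : ℕ}
    (h0 : ∀ a, ContDiffOn ℝ ∞ (f a) U) (h1 : ∃ M, ∀ a, ∀ x ∈ U, ‖f a x‖ ≤ M)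
    (h : UB U (fun a => fderiv ℝ (f a)) N) : UB U f (N + 1) := by
  refine ⟨h0, fun j hj => ?_⟩
  cases j with
  | zero => simpa using h1
  | succ j =>
    obtain ⟨M, hM⟩ := h.2 j (by omega)
    refine ⟨M, fun a x hx => ?_⟩
    rw [← norm_iteratedFDeriv_fderiv]
    exact hM a x hx

lemma UB.fderiv {U : Set E} (hU : IsOpen U) {f : ι → E → V} {N : ℕ} (h : UB U f (N + 1)) :
    UB U (fun a => fderiv ℝ (f a)) N := by
  refine ⟨fun a => (h.1 a).fderiv_of_isOpen hU (by simp), fun j hj => ?_⟩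
  obtain ⟨M, hM⟩ := h.2 (j + 1) (by omega)
  refine ⟨M, fun a x hx => ?_⟩
  rw [norm_iteratedFDeriv_fderiv]
  exact hM a x hx

lemma cda {U : Set E} (hU : IsOpen U) {f : E → V} (h : ContDiffOn ℝ ∞ f U) {x : E} (hx : x ∈ U)
    (j : ℕ) : ContDiffAt ℝ j f x :=
  (h.contDiffAt (hU.mem_nhds hx)).of_le (by exact_mod_cast le_top)

lemma UB.add {U : Set E} (hU : IsOpen U) {f g : ι → E → V} {N : ℕ} (hf : UB U f N)
    (hg : UB U g N) : UB U (fun a x => f a x + g a x) N := by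
  refine ⟨fun a => (hf.1 a).add (hg.1 a), fun j hj => ?_⟩
  obtain ⟨M, hM⟩ := hf.2 j hj
  obtain ⟨M', hM'⟩ := hg.2 j hj
  refine ⟨M + M', fun a x hx => ?_⟩
  have := iteratedFDeriv_add_apply (cda hU (hf.1 a) hx j) (cda hU (hg.1 a) hx j)
  have e : iteratedFDeriv ℝ j (fun x => f a x + g a x) x = _ := this
  rw [e]
  exact (norm_add_le _ _).trans (add_le_add (hM a x hx) (hM' a x hx))

lemma UB.smul_le {U : Set E} (hU : IsOpen U) {f : ι → E → V} {N : ℕ} (hf : UB U f N)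
    (c : ι → ℝ) (hc : ∀ a, |c a| ≤ 1) : UB U (fun a x => c a • f a x) N := by
  refine ⟨fun a => (hf.1 a).const_smul (c a), fun j hj => ?_⟩
  obtain ⟨M, hM⟩ := hf.2 j hj
  refine ⟨M, fun a x hx => ?_⟩
  rw [iteratedFDeriv_const_smul_apply' (cda hU (hf.1 a) hx j), norm_smul, Real.norm_eq_abs]
  exact (mul_le_of_le_one_left (norm_nonneg _) (hc a)).trans (hM a x hx)

lemma UB.bilin {U : Set E} (hU : IsOpen U) (B : V →L[ℝ] W →L[ℝ] X) {f : ι → E → V}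
    {g : ι → E → W} {N : ℕ} (hf : UB U f N) (hg : UB U g N) :
    UB U (fun a x => B (f a x) (g a x)) N := by
  refine ⟨fun a => B.isBoundedBilinearMap.contDiff.comp_contDiffOn
    ((hf.1 a).prodMk (hg.1 a)), fun j hj => ?_⟩
  have hf2 : ∀ i, ∃ M : ℝ, i < N → ∀ a, ∀ x ∈ U, ‖iteratedFDeriv ℝ i (f a) x‖ ≤ M := by
    intro i
    by_cases hi : i < N
    · obtain ⟨M, hM⟩ := hf.2 i hi; exact ⟨M, fun _ => hM⟩
    · exact ⟨0, fun h => absurd h hi⟩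
  have hg2 : ∀ i, ∃ M : ℝ, i < N → ∀ a, ∀ x ∈ U, ‖iteratedFDeriv ℝ i (g a) x‖ ≤ M := by
    intro i
    by_cases hi : i < N
    · obtain ⟨M, hM⟩ := hg.2 i hi; exact ⟨M, fun _ => hM⟩
    · exact ⟨0, fun h => absurd h hi⟩
  choose Mf hMf using hf2
  choose Mg hMg using hg2
  refine ⟨‖B‖ * ∑ i ∈ Finset.range (j + 1), (j.choose i : ℝ) * Mf i * Mg (j - i),
    fun a x hx => ?_⟩
  have := B.norm_iteratedFDerivWithin_le_of_bilinear (hf.1 a) (hg.1 a) hU.uniqueDiffOn hx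
    (n := j) (by exact_mod_cast le_top)
  simp only [iteratedFDerivWithin_of_isOpen _ hU hx] at this
  refine this.trans ?_
  gcongr with i hi
  · have := (norm_nonneg _).trans (hMf i (by simp at hi; omega) a x hx)
    positivity
  · exact hMf i (by simp at hi; omega) a x hx
  · exact hMg (j - i) (by omega) a x hx

lemma UB.inv {U : Set E} (hU : IsOpen U) {f : ι → E → ℝ} {c : ℝ} (hc : 0 < c)
    (hlow : ∀ a, ∀ x ∈ U, c ≤ |f a x|) {N : ℕ} (hf : UB U f N) :
    UB U (fun a x => (f a x)⁻¹) N := by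
  have hne : ∀ a, ∀ x ∈ U, f a x ≠ 0 := fun a x hx h => by
    have := hlow a x hx
    rw [h, abs_zero] at this
    linarith
  have hsm : ∀ a, ContDiffOn ℝ ∞ (fun x => (f a x)⁻¹) U := fun a => (hf.1 a).inv (hne a)
  induction N with
  | zero => exact ⟨hsm, fun j hj => absurd hj (by omega)⟩
  | succ N ih =>
    have i1 := ih (hf.mono (Nat.le_succ N))
    refine UB.succ hsm ⟨c⁻¹, fun a x hx => ?_⟩ ?_
    · rw [norm_inv, Real.norm_eq_abs]
      exact inv_anti₀ hc (hlow a x hx)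
    · have i2 := UB.bilin hU (ContinuousLinearMap.mul ℝ ℝ) i1 i1
      have i3 := UB.bilin hU (ContinuousLinearMap.lsmul ℝ ℝ) i2 (hf.fderiv hU)
      have i4 := i3.smul_le hU (fun _ => -1) (by simp)
      refine i4.congr hU fun a x hx => ?_
      have hd : HasFDerivAt (f a) (_root_.fderiv ℝ (f a) x) x :=
        (((hf.1 a).contDiffAt (hU.mem_nhds hx)).differentiableAt (by simp)).hasFDerivAt
      have h1 := (hasDerivAt_inv (hne a x hx)).comp_hasFDerivAt x hd
      have h2 : _root_.fderiv ℝ (fun x => (f a x)⁻¹) x = _ := h1.fderiv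
      rw [h2]
      ext v
      simp [pow_two]

/-- Class of families with mixed derivatives bounded with weight `w ^ l`. -/
def Cls (U : Set E) (w : ι → ℝ) (S : ι → Set ℝ) (F : ι → E → ℝ → V) : Prop :=
  (∀ a, Sm U (F a)) ∧ ∀ i l : ℕ, ∃ M : ℝ, ∀ a, ∀ x ∈ U, ∀ s ∈ S a,
    ‖iteratedFDeriv ℝ i (fun y => iteratedDeriv l (fun t => F a y t) s) x‖ ≤ M * w a ^ l

lemma norm_dx {U : Set E} (hU : IsOpen U) {F : E → ℝ → V} (h : Sm U F) (i l : ℕ) {x : E}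
    (hx : x ∈ U) (s : ℝ) :
    ‖iteratedFDeriv ℝ i (fun y => iteratedDeriv l
      (fun t => fderiv ℝ (fun z => F z t) y) s) x‖ =
    ‖iteratedFDeriv ℝ (i + 1) (fun y => iteratedDeriv l (fun t => F y t) s) x‖ := by
  rw [← norm_iteratedFDeriv_fderiv]
  have : (fun y => iteratedDeriv l (fun t => fderiv ℝ (fun z => F z t) y) s) =ᶠ[𝓝 x]
      fderiv ℝ (fun y => iteratedDeriv l (fun t => F y t) s) := by
    filter_upwards [hU.mem_nhds hx] with y hy using h.comm_iter hU l hy s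
  rw [(this.iteratedFDeriv ℝ i).eq_of_nhds]

lemma norm_smul_mixed {U : Set E} (hU : IsOpen U) {F : E → ℝ → V} (h : Sm U F) (c : ℝ)
    (i l : ℕ) {x : E} (hx : x ∈ U) (s : ℝ) :
    ‖iteratedFDeriv ℝ i (fun y => iteratedDeriv l (fun t => c • F y t) s) x‖ =
    |c| * ‖iteratedFDeriv ℝ i (fun y => iteratedDeriv l (fun t => F y t) s) x‖ := by
  have : (fun y => iteratedDeriv l (fun t => c • F y t) s) =
      fun y => c • iteratedDeriv l (fun t => F y t) s := by
    funext y
    exact iteratedDeriv_fun_const_smul_field c _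
  rw [this, iteratedFDeriv_const_smul_apply' (cda hU ((h.ds_iter hU l).slice s) hx i), norm_smul,
    Real.norm_eq_abs]

lemma Cls.dx {U : Set E} (hU : IsOpen U) {w : ι → ℝ} {S : ι → Set ℝ} {F : ι → E → ℝ → V}
    (h : Cls U w S F) : Cls U w S (fun a x s => fderiv ℝ (fun y => F a y s) x) := by
  refine ⟨fun a => (h.1 a).dx hU, fun i l => ?_⟩
  obtain ⟨M, hM⟩ := h.2 (i + 1) l
  refine ⟨M, fun a x hx s hs => ?_⟩
  rw [norm_dx hU (h.1 a) i l hx s]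
  exact hM a x hx s hs

lemma Cls.ds {U : Set E} (hU : IsOpen U) {w : ι → ℝ} (hw : ∀ a, 0 < w a) {S : ι → Set ℝ}
    {F : ι → E → ℝ → V}
    (h : Cls U w S F) : Cls U w S (fun a x s => (w a)⁻¹ • deriv (fun t => F a x t) s) := by
  refine ⟨fun a => ((h.1 a).ds hU).smul _, fun i l => ?_⟩
  obtain ⟨M, hM⟩ := h.2 i (l + 1)
  refine ⟨M, fun a x hx s hs => ?_⟩
  rw [norm_smul_mixed hU ((h.1 a).ds hU) _ i l hx s]
  have := hM a x hx s hs
  simp only [iteratedDeriv_succ'] at this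
  have hwa := hw a
  rw [abs_of_pos (inv_pos.2 hwa), inv_mul_le_iff₀ hwa]
  calc _ ≤ _ := this
    _ = _ := by ring

lemma Cls.comp {U : Set E} (hU : IsOpen U) {w : ι → ℝ} (hw : ∀ a, 0 < w a) {S : ι → Set ℝ}
    {φ : ι → E → ℝ} (hφ : ∀ a, ContDiffOn ℝ ∞ (φ a) U) (hS : ∀ a, ∀ x ∈ U, φ a x ∈ S a)
    (N : ℕ) : ∀ {V : Type} [NormedAddCommGroup V] [NormedSpace ℝ V] {F : ι → E → ℝ → V},
    UB U (fun a x => w a • fderiv ℝ (φ a) x) N → Cls U w S F →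
    UB U (fun a x => F a x (φ a x)) (N + 1) := by
  induction N with
  | zero =>
    intro V _ _ F h hF
    refine UB.succ (fun a => (hF.1 a).graph (hφ a)) ?_ ⟨fun a =>
      ((hF.1 a).graph (hφ a)).fderiv_of_isOpen hU (by simp), fun j hj => absurd hj (by omega)⟩
    obtain ⟨M, hM⟩ := hF.2 0 0
    exact ⟨M, fun a x hx => by simpa using hM a x hx _ (hS a x hx)⟩
  | succ N ih =>
    intro V _ _ F h hF
    refine UB.succ (fun a => (hF.1 a).graph (hφ a)) ?_ ?_
    · obtain ⟨M, hM⟩ := hF.2 0 0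
      exact ⟨M, fun a x hx => by simpa using hM a x hx _ (hS a x hx)⟩
    · have h' := h.mono (Nat.le_succ N)
      have i1 := ih h' (hF.dx hU)
      have i2 := ih h' (hF.ds hU hw)
      have i3 := i1.add hU (UB.bilin hU (ContinuousLinearMap.smulRightL ℝ E V) h i2)
      refine i3.congr hU fun a x hx => ?_
      rw [(hF.1 a).fderiv_graph hU (hφ a) hx]
      congr 1
      ext v
      have := (hw a).ne'
      simp [smul_smul]
      congr 1
      field_simp

end Helpers

/-- Let `U ⊆ ℝⁿ` be open, `C > 0`, `k₀ ≥ 1`, and for `k ≥ k₀` let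
`H_k : U × ℝ → ℝ` and `φ_k : U → ℝ` be smooth with `|φ_k| ≤ C k⁻²` and `H_k(x,φ_k(x)) = 1`
on `U`.  Under the derivative bounds (a) `|∂_x^α ∂_s^ℓ H_k| ≤ C_{α,ℓ} k^ℓ`,
(b) `|∂_x^α ∂_s^ℓ H_k| ≤ C_{α,ℓ} k^{ℓ-1}` for `|α| ≥ 1`, and the lower bound
(c) `|∂_s H_k| ≥ k/C`, all on `{(x,s) : x ∈ U, |s| ≤ C k⁻²}`, one has
`|∂_x^α φ_k| ≤ C'_α k⁻²` on `U` for every `α` with `|α| ≥ 1` (multi-indices are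
formalized through the order `i = |α|` of the full iterated derivative in `x`). -/
theorem stmt12 {n : ℕ} (hn : 1 ≤ n)
    (U : Set (Fin n → ℝ)) (hUopen : IsOpen U)
    (C k₀ : ℝ) (hC : 0 < C) (hk₀ : 1 ≤ k₀)
    (H : ℝ → (Fin n → ℝ) → ℝ → ℝ)
    (φ : ℝ → (Fin n → ℝ) → ℝ)
    (hHsmooth : ∀ k ≥ k₀, ContDiffOn ℝ (⊤ : ℕ∞)
      (fun p : (Fin n → ℝ) × ℝ => H k p.1 p.2) (U ×ˢ univ))
    (hφsmooth : ∀ k ≥ k₀, ContDiffOn ℝ (⊤ : ℕ∞) (φ k) U)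
    (hφbd : ∀ k ≥ k₀, ∀ x ∈ U, |φ k x| ≤ C / k ^ 2)
    (hφeq : ∀ k ≥ k₀, ∀ x ∈ U, H k x (φ k x) = 1)
    (hda : ∀ i ℓ : ℕ, ∃ C' > (0:ℝ), ∀ k ≥ k₀, ∀ x ∈ U, ∀ s : ℝ, |s| ≤ C / k ^ 2 →
      ‖iteratedFDeriv ℝ i (fun y => iteratedDeriv ℓ (fun s' => H k y s') s) x‖
        ≤ C' * k ^ ℓ)
    (hdb : ∀ i ℓ : ℕ, 1 ≤ i → ∃ C' > (0:ℝ), ∀ k ≥ k₀, ∀ x ∈ U, ∀ s : ℝ,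
      |s| ≤ C / k ^ 2 →
      ‖iteratedFDeriv ℝ i (fun y => iteratedDeriv ℓ (fun s' => H k y s') s) x‖
        ≤ C' * k ^ ℓ / k)
    (hdc : ∀ k ≥ k₀, ∀ x ∈ U, ∀ s : ℝ, |s| ≤ C / k ^ 2 →
      k / C ≤ |deriv (fun s' => H k x s') s|) :
    ∀ i : ℕ, 1 ≤ i → ∃ C' > (0:ℝ), ∀ k ≥ k₀, ∀ x ∈ U,
      ‖iteratedFDeriv ℝ i (φ k) x‖ ≤ C' / k ^ 2 := by
  classical
  let ι := {k : ℝ // k₀ ≤ k}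
  have h1 : ∀ a : ι, 1 ≤ a.1 := fun a => hk₀.trans a.2
  have h0 : ∀ a : ι, 0 < a.1 := fun a => zero_lt_one.trans_le (h1 a)
  let w : ι → ℝ := fun a => a.1
  let S : ι → Set ℝ := fun a => {s | |s| ≤ C / a.1 ^ 2}
  have hSm : ∀ a : ι, Sm U (H a.1) := fun a => hHsmooth a.1 a.2
  have hφs : ∀ a : ι, ContDiffOn ℝ ∞ (φ a.1) U := fun a => hφsmooth a.1 a.2
  have hS : ∀ a : ι, ∀ x ∈ U, φ a.1 x ∈ S a := fun a x hx => hφbd a.1 a.2 x hx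
  have cH : Cls U w S (fun a : ι => H a.1) := by
    refine ⟨hSm, fun i l => ?_⟩
    obtain ⟨M, -, hM⟩ := hda i l
    exact ⟨M, fun a x hx s hs => hM a.1 a.2 x hx s hs⟩
  have cA := cH.ds hUopen h0
  have cB : Cls U w S (fun (a : ι) x s => a.1 • fderiv ℝ (fun y => H a.1 y s) x) := by
    refine ⟨fun a => ((hSm a).dx hUopen).smul _, fun i l => ?_⟩
    obtain ⟨M, -, hM⟩ := hdb (i + 1) l (by omega)
    refine ⟨M, fun a x hx s hs => ?_⟩
    rw [norm_smul_mixed hUopen ((hSm a).dx hUopen) _ i l hx s, norm_dx hUopen (hSm a) i l hx s,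
      abs_of_pos (h0 a)]
    have := hM a.1 a.2 x hx s hs
    rw [le_div_iff₀ (h0 a)] at this
    linarith
  have key : ∀ N, UB U (fun (a : ι) x => (a.1 ^ 2) • fderiv ℝ (φ a.1) x) N := by
    intro N
    induction N with
    | zero =>
      exact ⟨fun a => ((hφs a).fderiv_of_isOpen hUopen (by simp)).const_smul _,
        fun j hj => absurd hj (by omega)⟩
    | succ N ih =>
      have i0 : UB U (fun (a : ι) x => w a • fderiv ℝ (φ a.1) x) N := by
        refine (ih.smul_le hUopen (fun a => (a.1)⁻¹) fun a => ?_).congr hUopen fun a x hx => ?_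
        · rw [abs_of_pos (inv_pos.2 (h0 a))]
          exact inv_le_one_of_one_le₀ (h1 a)
        · have := (h0 a).ne'
          rw [smul_smul]
          congr 1
          simp only [w]
          field_simp
      have iA := Cls.comp hUopen h0 hφs hS N i0 cA
      have iB := Cls.comp hUopen h0 hφs hS N i0 cB
      have iA' := UB.inv hUopen (c := C⁻¹) (inv_pos.2 hC) (fun a x hx => by
        have := hdc a.1 a.2 x hx _ (hS a x hx)
        rw [smul_eq_mul, abs_mul, abs_of_pos (inv_pos.2 (h0 a)), le_inv_mul_iff₀ (h0 a)]
        simpa [div_eq_mul_inv] using this) iA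
      have i3 := (UB.bilin hUopen (ContinuousLinearMap.lsmul ℝ ℝ) iA' iB).smul_le hUopen
        (fun _ => -1) (by simp)
      refine i3.congr hUopen fun a x hx => ?_
      have e := (hSm a).fderiv_graph hUopen (hφs a) hx
      have e0 : (fun y => H a.1 y (φ a.1 y)) =ᶠ[𝓝 x] fun _ => (1 : ℝ) := by
        filter_upwards [hUopen.mem_nhds hx] with y hy using hφeq a.1 a.2 y hy
      rw [e0.fderiv_eq, fderiv_fun_const] at e
      have hne : deriv (fun t => H a.1 x t) (φ a.1 x) ≠ 0 := by
        intro h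
        have := hdc a.1 a.2 x hx _ (hS a x hx)
        rw [h, abs_zero] at this
        have := div_pos (h0 a) hC
        linarith
      have hk := (h0 a).ne'
      ext v
      have ev := DFunLike.congr_fun e v
      simp at ev
      simp [w]
      have : fderiv ℝ (fun y => H a.1 y (φ a.1 x)) x v =
        - (fderiv ℝ (φ a.1) x v * deriv (fun t => H a.1 x t) (φ a.1 x)) := by linarith
      rw [this]
      field_simp
  intro i hi
  obtain ⟨j, rfl⟩ : ∃ j, i = j + 1 := ⟨i - 1, by omega⟩
  obtain ⟨M, hM⟩ := (key (j + 1)).2 j (by omega)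
  refine ⟨max M 1, by positivity, fun k hk x hx => ?_⟩
  have := hM ⟨k, hk⟩ x hx
  have hk0 : 0 < k := h0 ⟨k, hk⟩
  rw [iteratedFDeriv_const_smul_apply' (cda hUopen
    ((hφs ⟨k, hk⟩).fderiv_of_isOpen hUopen (by simp)) hx j), norm_smul] at this
  have e : ‖iteratedFDeriv ℝ j (fun x => fderiv ℝ (φ k) x) x‖ =
    ‖iteratedFDeriv ℝ (j + 1) (φ k) x‖ := norm_iteratedFDeriv_fderiv
  simp only [e] at this
  rw [le_div_iff₀ (by positivity)]
  rw [Real.norm_of_nonneg (by positivity)] at this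
  calc _ = k ^ 2 * ‖iteratedFDeriv ℝ (j + 1) (φ k) x‖ := mul_comm _ _
    _ ≤ M := this
    _ ≤ _ := le_max_left _ _
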